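/- arXiv:1506.02555 — 6 statements merged into one kernel-verified Lean document; each statement's English description precedes it below -/
import Mathlib

section
/- For every real number γ > 1 and every integer n ≥ 1, there exists a real number w₀ > 0 such that (1 − γ)·R_n(w₀) + 2·w₀²·R_n'(w₀) = 0. -/
/-- `R n x = ∑_{m=0}^{n} ((n+m)! / (m! (n-m)!)) x^m`, real version. -/
noncomputable def R (n : ℕ) (x : ℝ) : ℝ :=
  ∑ m ∈ Finset.range (n + 1),
    ((Nat.factorial (n + m) : ℝ) / ((Nat.factorial m : ℝ) * (Nat.factorial (n - m) : ℝ))) * x ^ m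

lemma R_hasDerivAt (n : ℕ) (x : ℝ) : HasDerivAt (R n)
    (∑ m ∈ Finset.range (n + 1),
      ((Nat.factorial (n + m) : ℝ) / ((Nat.factorial m : ℝ) * (Nat.factorial (n - m) : ℝ))) *
        ((m : ℝ) * x ^ (m - 1))) x := by
  unfold R
  exact HasDerivAt.fun_sum fun m _ => (hasDerivAt_pow m x).const_mul _

/-- For every real `γ > 1` and every integer `n ≥ 1` there is a real `w₀ > 0` with
`(1 − γ) R_n(w₀) + 2 w₀² R_n'(w₀) = 0`. -/
theorem exists_pos_root (γ : ℝ) (hγ : 1 < γ) (n : ℕ) (hn : 1 ≤ n) :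
    ∃ w₀ : ℝ, 0 < w₀ ∧ (1 - γ) * R n w₀ + 2 * w₀ ^ 2 * deriv (R n) w₀ = 0 := by
  have hd : deriv (R n) = fun x => _ := funext fun x => (R_hasDerivAt n x).deriv
  have hcont : Continuous fun w : ℝ => (1 - γ) * R n w + 2 * w ^ 2 * deriv (R n) w := by
    rw [hd]
    unfold R
    fun_prop
  have hf : (Nat.factorial n : ℝ) ≠ 0 := by positivity
  have h0 : (1 - γ) * R n 0 + 2 * (0:ℝ) ^ 2 * deriv (R n) 0 < 0 := by
    have : R n 0 = 1 := by
      unfold R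
      rw [Finset.sum_range_succ']
      simp [hf]
    rw [this]
    norm_num
    exact hγ
  have h1 : 0 < (1 - γ) * R n γ + 2 * γ ^ 2 * deriv (R n) γ := by
    obtain ⟨c, hc⟩ : ∃ c : ℕ → ℝ, c = fun m => ((Nat.factorial (n + m) : ℝ) /
      ((Nat.factorial m : ℝ) * (Nat.factorial (n - m) : ℝ))) := ⟨_, rfl⟩
    have hcpos : ∀ m, 0 < c m := fun m => by rw [hc]; positivity
    have hc0 : c 0 = 1 := by rw [hc]; simp [hf]
    have hc1 : 1 ≤ c 1 := by
      rw [hc]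
      simp only [Nat.factorial_one, Nat.cast_one, one_mul]
      rw [one_le_div (by positivity)]
      exact_mod_cast Nat.factorial_le (by omega)
    obtain ⟨S, hS⟩ : ∃ S : ℝ, S = ∑ m ∈ Finset.range n, c (m + 1) * γ ^ (m + 1) := ⟨_, rfl⟩
    have hR : R n γ = S + 1 := by
      have : R n γ = ∑ m ∈ Finset.range (n + 1), c m * γ ^ m := by rw [hc]; rfl
      rw [this, Finset.sum_range_succ', hS, hc0]
      simp
    have hD : S ≤ γ * deriv (R n) γ := by
      have : deriv (R n) γ = ∑ m ∈ Finset.range (n + 1), c m * ((m : ℝ) * γ ^ (m - 1)) := by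
        rw [hc]; exact (R_hasDerivAt n γ).deriv
      rw [this, Finset.sum_range_succ', hS, mul_add, Finset.mul_sum]
      simp only [Nat.cast_zero, zero_mul, mul_zero, add_zero, Nat.add_sub_cancel]
      refine Finset.sum_le_sum fun m _ => ?_
      have hp : 0 ≤ c (m + 1) * γ ^ (m + 1) := by
        have := hcpos (m + 1)
        positivity
      have hm : (0:ℝ) ≤ m := by positivity
      have : γ * (c (m + 1) * (((m + 1 : ℕ) : ℝ) * γ ^ m)) =
          c (m + 1) * γ ^ (m + 1) + m * (c (m + 1) * γ ^ (m + 1)) := by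
        push_cast; ring
      rw [this]
      nlinarith [mul_nonneg hm hp]
    have hS1 : 1 ≤ S := by
      have h := Finset.single_le_sum (f := fun m => c (m + 1) * γ ^ (m + 1))
        (s := Finset.range n) (fun m _ => by have := hcpos (m + 1); positivity)
        (Finset.mem_range.2 (show 0 < n by omega))
      rw [← hS] at h
      simp only [zero_add, pow_one] at h
      nlinarith
    rw [hR]
    have := mul_le_mul_of_nonneg_left hD (show 0 ≤ 2 * γ by linarith)
    nlinarith
  obtain ⟨w, hw, hw0⟩ := intermediate_value_Ioo (show (0:ℝ) ≤ γ by linarith)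
    hcont.continuousOn ⟨h0, h1⟩
  exact ⟨w, hw.1, hw0⟩
end

section
/- For every integer n ≥ 2 and every real number w with w ≥ 1/(2√3), one has w·R_n'(w) ≥ R_n(w). -/
/-- For `n ≥ 2` and `w ≥ 1/(2√3)`, one has `w R_n'(w) ≥ R_n(w)`. -/
theorem case_one_inequality (n : ℕ) (hn : 2 ≤ n) (w : ℝ)
    (hw : 1 / (2 * Real.sqrt 3) ≤ w) :
    R n w ≤ w * deriv (R n) w := by
  obtain ⟨k, rfl⟩ := Nat.exists_eq_add_of_le' hn
  have hs : (0 : ℝ) < Real.sqrt 3 := by positivity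
  have hw0 : 0 < w := lt_of_lt_of_le (by positivity) hw
  have hw2 : 1 / 12 ≤ w ^ 2 := by
    have h := pow_le_pow_left₀ (by positivity) hw 2
    rw [div_pow, mul_pow, Real.sq_sqrt (by norm_num)] at h
    norm_num at h ⊢
    exact h
  set a : ℕ → ℝ := fun m => (Nat.factorial (k + 2 + m) : ℝ) /
    ((Nat.factorial m : ℝ) * (Nat.factorial (k + 2 - m) : ℝ)) with ha
  have hR : R (k + 2) = fun x => ∑ m ∈ Finset.range (k + 2 + 1), a m * x ^ m := rfl
  have hd : HasDerivAt (R (k + 2))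
      (∑ m ∈ Finset.range (k + 2 + 1), a m * ((m : ℝ) * w ^ (m - 1))) w := by
    rw [hR]
    exact HasDerivAt.fun_sum fun m _ => (hasDerivAt_pow m w).const_mul (a m)
  have a0 : a 0 = 1 := by
    simp only [ha]
    simp [Nat.factorial_ne_zero]
  have a2 : 12 ≤ a 2 := by
    have h : a 2 = ((k : ℝ) + 4) * (k + 3) * (k + 2) * (k + 1) / 2 := by
      have hk : (Nat.factorial k : ℝ) ≠ 0 := by positivity
      simp only [ha, Nat.add_sub_cancel, Nat.factorial_succ, Nat.factorial_zero]
      push_cast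
      field_simp
      ring
    have hk : (0 : ℝ) ≤ k := by positivity
    have e : ((k : ℝ) + 4) * (k + 3) * (k + 2) * (k + 1) / 2
        = 12 + (k ^ 4 + 10 * k ^ 3 + 35 * k ^ 2 + 50 * k) / 2 := by ring
    rw [h, e]
    have : (0 : ℝ) ≤ (k ^ 4 + 10 * k ^ 3 + 35 * k ^ 2 + 50 * k) / 2 := by positivity
    linarith
  have apos : ∀ m, 0 ≤ a m := fun m => by simp only [ha]; positivity
  have key : w * deriv (R (k + 2)) w - R (k + 2) w
      = ∑ m ∈ Finset.range (k + 2 + 1), ((m : ℝ) - 1) * a m * w ^ m := by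
    rw [hd.deriv, hR, Finset.mul_sum, ← Finset.sum_sub_distrib]
    refine Finset.sum_congr rfl fun m _ => ?_
    rcases m with _ | m
    · simp
    · simp only [Nat.add_sub_cancel, pow_succ]
      ring
  rw [Finset.sum_range_succ', Finset.sum_range_succ', Finset.sum_range_succ'] at key
  have hrest : 0 ≤ ∑ m ∈ Finset.range k,
      (((m + 1 + 1 + 1 : ℕ) : ℝ) - 1) * a (m + 1 + 1 + 1) * w ^ (m + 1 + 1 + 1) := by
    refine Finset.sum_nonneg fun m _ => ?_
    have h1 : (0 : ℝ) ≤ ((m + 1 + 1 + 1 : ℕ) : ℝ) - 1 := by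
      push_cast
      have : (0 : ℝ) ≤ m := by positivity
      linarith
    exact mul_nonneg (mul_nonneg h1 (apos _)) (by positivity)
  have h2 : 1 ≤ a 2 * w ^ 2 := by nlinarith
  norm_num [a0] at key hrest
  linarith
end

section
/- For every integer n ≥ 2 and every real number w with 0 < w ≤ 1/(2√3), one has R_n'(w) ≥ 2·R_n(w). -/
/-- The coefficient of `x ^ m` in `R n`. -/
noncomputable def coeffA (n m : ℕ) : ℝ :=
  (Nat.factorial (n + m) : ℝ) / ((Nat.factorial m : ℝ) * (Nat.factorial (n - m) : ℝ))

lemma coeffA_pos (n m : ℕ) : 0 < coeffA n m := by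
  unfold coeffA; positivity

lemma coeffA_succ (n m : ℕ) (h : m < n) :
    ((m : ℝ) + 1) * coeffA n (m + 1) = ((n : ℝ) + m + 1) * ((n : ℝ) - m) * coeffA n m := by
  obtain ⟨d, rfl⟩ : ∃ d, n = m + d + 1 := ⟨n - m - 1, by omega⟩
  unfold coeffA
  have h1 : m + d + 1 - (m + 1) = d := by omega
  have h2 : m + d + 1 - m = d + 1 := by omega
  have h3 : m + d + 1 + (m + 1) = (m + d + 1 + m) + 1 := by omega
  rw [h1, h2, h3, Nat.factorial_succ (m + d + 1 + m), Nat.factorial_succ m, Nat.factorial_succ d]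
  have p1 : (Nat.factorial m : ℝ) ≠ 0 := by positivity
  have p2 : (Nat.factorial d : ℝ) ≠ 0 := by positivity
  have p3 : ((m : ℝ) + 1) ≠ 0 := by positivity
  have p4 : ((d : ℝ) + 1) ≠ 0 := by positivity
  push_cast
  field_simp
  ring

lemma deriv_R_eq (n : ℕ) (w : ℝ) :
    deriv (R n) w = ∑ m ∈ Finset.range n, ((m : ℝ) + 1) * coeffA n (m + 1) * w ^ m := by
  have h : HasDerivAt (R n)
      (∑ m ∈ Finset.range (n + 1), coeffA n m * ((m : ℝ) * w ^ (m - 1))) w := by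
    have := HasDerivAt.fun_sum (u := Finset.range (n + 1))
      (A := fun m x => coeffA n m * x ^ m)
      (A' := fun m => coeffA n m * ((m : ℝ) * w ^ (m - 1))) (x := w)
      (fun m _ => (hasDerivAt_pow m w).const_mul _)
    exact this
  rw [h.deriv, Finset.sum_range_succ']
  simp only [Nat.cast_zero, zero_mul, mul_zero, add_zero]
  refine Finset.sum_congr rfl fun m _ => ?_
  push_cast
  ring

/-- For `n ≥ 2` and `0 < w ≤ 1/(2√3)`, one has `R_n'(w) ≥ 2 R_n(w)`. -/
theorem case_two_inequality (n : ℕ) (hn : 2 ≤ n) (w : ℝ)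
    (hw0 : 0 < w) (hw : w ≤ 1 / (2 * Real.sqrt 3)) :
    2 * R n w ≤ deriv (R n) w := by
  have hw1 : w ≤ 1 / 2 := by
    refine hw.trans ?_
    have : (1 : ℝ) ≤ Real.sqrt 3 := Real.one_le_sqrt.mpr (by norm_num)
    apply one_div_le_one_div_of_le <;> linarith
  rw [deriv_R_eq]
  have hR : R n w = ∑ m ∈ Finset.range (n + 1), coeffA n m * w ^ m := rfl
  rw [hR]
  obtain ⟨k, rfl⟩ : ∃ k, n = k + 1 := ⟨n - 1, by omega⟩
  have hk : (1 : ℝ) ≤ k := by exact_mod_cast (by omega : 1 ≤ k)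
  rw [Finset.sum_range_succ _ (k + 1), Finset.sum_range_succ _ k, Finset.sum_range_succ _ k]
  have hsum : 2 * ∑ m ∈ Finset.range k, coeffA (k + 1) m * w ^ m
      ≤ ∑ m ∈ Finset.range k, ((m : ℝ) + 1) * coeffA (k + 1) (m + 1) * w ^ m := by
    rw [Finset.mul_sum]
    refine Finset.sum_le_sum fun m hm => ?_
    have hm' : m < k := Finset.mem_range.mp hm
    have hmr : (m : ℝ) + 1 ≤ k := by exact_mod_cast hm'
    rw [coeffA_succ _ _ (by omega), ← mul_assoc]
    have := coeffA_pos (k + 1) m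
    have h0 : (0 : ℝ) ≤ m := by positivity
    gcongr
    push_cast
    nlinarith
  have hlast := coeffA_succ (k + 1) k (by omega)
  have e : coeffA (k + 1) (k + 1) = 2 * coeffA (k + 1) k := by
    have p : ((k : ℝ) + 1) ≠ 0 := by positivity
    apply mul_left_cancel₀ p
    rw [hlast]; push_cast; ring
  have hp : 0 < coeffA (k + 1) k * w ^ k := mul_pos (coeffA_pos _ _) (by positivity)
  rw [e, pow_succ]
  have : 0 ≤ (coeffA (k + 1) k * w ^ k) * (2 * ((k : ℝ) + 1) - 2 - 4 * w) :=
    mul_nonneg hp.le (by linarith)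
  nlinarith
end

section
/- Let γ > 1 be real, let n ≥ 2 be an integer, and let w₀ be a real number with w₀ ≥ 1/(2√3) satisfying (1 − γ)·R_n(w₀) + 2·w₀²·R_n'(w₀) = 0. Then 2w₀ ≤ γ − 1, and hence −1/(2w₀) ≤ −1/(γ−1). -/
lemma R_pos (n : ℕ) (w : ℝ) (hw : 0 < w) : 0 < R n w := by
  unfold R
  apply Finset.sum_pos
  · intro m _
    positivity
  · exact ⟨0, by simp⟩

lemma deriv_R (n : ℕ) (w : ℝ) : deriv (R n) w = ∑ m ∈ Finset.range (n + 1),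
    ((Nat.factorial (n + m) : ℝ) / ((Nat.factorial m : ℝ) * (Nat.factorial (n - m) : ℝ))) *
      ((m : ℝ) * w ^ (m - 1)) := by
  apply HasDerivAt.deriv
  unfold R
  apply HasDerivAt.fun_sum
  intro m _
  exact (hasDerivAt_pow m w).const_mul _

lemma R_le (n : ℕ) (hn : 2 ≤ n) (w : ℝ) (hw : 0 < w) (hw2 : 1 ≤ 12 * w ^ 2) :
    R n w ≤ w * deriv (R n) w := by
  have key : w * deriv (R n) w - R n w = ∑ m ∈ Finset.range (n + 1),
      ((Nat.factorial (n + m) : ℝ) / ((Nat.factorial m : ℝ) * (Nat.factorial (n - m) : ℝ))) *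
        (((m : ℝ) - 1) * w ^ m) := by
    rw [deriv_R]
    unfold R
    rw [Finset.mul_sum, ← Finset.sum_sub_distrib]
    apply Finset.sum_congr rfl
    intro m _
    rcases m with _ | m
    · simp
    · simp only [Nat.add_sub_cancel, pow_succ]
      ring
  obtain ⟨k, rfl⟩ : ∃ k, n = k + 2 := ⟨n - 2, by omega⟩
  rw [Finset.sum_range_succ', Finset.sum_range_succ', Finset.sum_range_succ'] at key
  have h3 : 0 ≤ ∑ i ∈ Finset.range k, ((Nat.factorial (k + 2 + (i + 1 + 1 + 1)) : ℝ) /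
      ((Nat.factorial (i + 1 + 1 + 1) : ℝ) * (Nat.factorial (k + 2 - (i + 1 + 1 + 1)) : ℝ))) *
        ((((i + 1 + 1 + 1 : ℕ) : ℝ) - 1) * w ^ (i + 1 + 1 + 1)) := by
    apply Finset.sum_nonneg
    intro i _
    have : (0 : ℝ) ≤ ((i + 1 + 1 + 1 : ℕ) : ℝ) - 1 := by
      push_cast
      have : (0 : ℝ) ≤ i := Nat.cast_nonneg i
      linarith
    positivity
  have h2 : (12 : ℝ) ≤ (Nat.factorial (k + 2 + (0 + 1 + 1)) : ℝ) /
      ((Nat.factorial (0 + 1 + 1) : ℝ) * (Nat.factorial (k + 2 - (0 + 1 + 1)) : ℝ)) := by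
    have e : k + 2 - (0 + 1 + 1) = k := by omega
    have hk : (0 : ℝ) < (Nat.factorial k : ℝ) := by positivity
    have hk0 : (0 : ℝ) ≤ k := Nat.cast_nonneg k
    rw [e, le_div_iff₀ (by positivity)]
    have e2 : k + 2 + (0 + 1 + 1) = k + 1 + 1 + 1 + 1 := by omega
    rw [e2]
    simp only [Nat.factorial_succ, Nat.factorial_zero]
    push_cast
    have : (24 : ℝ) ≤ ((k : ℝ) + 1 + 1 + 1 + 1) * ((k + 1 + 1 + 1) * ((k + 1 + 1) * (k + 1))) := by
      have h : (0 : ℝ) ≤ 50 * k + 35 * k ^ 2 + 10 * k ^ 3 + k ^ 4 := by positivity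
      nlinarith [h]
    nlinarith [mul_le_mul_of_nonneg_right this hk.le]
  have h0 : (Nat.factorial (k + 2 + 0) : ℝ) /
      ((Nat.factorial 0 : ℝ) * (Nat.factorial (k + 2 - 0) : ℝ)) = 1 := by
    have hk : ((Nat.factorial (k + 2) : ℕ) : ℝ) ≠ 0 := by positivity
    simp [hk]
  rw [h0] at key
  have h4 := mul_le_mul_of_nonneg_right h2 (sq_nonneg w)
  norm_num at key h3 h4
  linarith

/-- Estimate (4.8): if `γ > 1`, `n ≥ 2` and `w₀ ≥ 1/(2√3)` is a root of
`(1 − γ) R_n(w) + 2 w² R_n'(w) = 0`, then `2w₀ ≤ γ − 1` and `−1/(2w₀) ≤ −1/(γ−1)`. -/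
theorem case_one_bound (γ : ℝ) (hγ : 1 < γ) (n : ℕ) (hn : 2 ≤ n) (w₀ : ℝ)
    (hw : 1 / (2 * Real.sqrt 3) ≤ w₀)
    (hroot : (1 - γ) * R n w₀ + 2 * w₀ ^ 2 * deriv (R n) w₀ = 0) :
    2 * w₀ ≤ γ - 1 ∧ -1 / (2 * w₀) ≤ -1 / (γ - 1) := by
  have h3 : (0:ℝ) < Real.sqrt 3 := by positivity
  have hwp : 0 < w₀ := lt_of_lt_of_le (by positivity) hw
  have hw2 : 1 ≤ 12 * w₀ ^ 2 := by
    have h := pow_le_pow_left₀ (by positivity) hw 2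
    rw [div_pow, mul_pow, Real.sq_sqrt (by norm_num)] at h
    norm_num at h
    linarith
  have hR := R_pos n w₀ hwp
  have hle := R_le n hn w₀ hwp hw2
  have h1 : 2 * w₀ ≤ γ - 1 := by
    have := mul_le_mul_of_nonneg_left hle (by positivity : 0 ≤ 2 * w₀)
    refine le_of_mul_le_mul_right ?_ hR
    nlinarith
  refine ⟨h1, ?_⟩
  rw [neg_div, neg_div]
  exact neg_le_neg (one_div_le_one_div_of_le (by positivity) h1)
end

section
/- Let γ > 1 be real, let n ≥ 2 be an integer, and let w₀ > 0 be a real number satisfying (1 − γ)·R_n(w₀) + 2·w₀²·R_n'(w₀) = 0. Then −1/(2w₀) ≤ −1/max{γ−1, √(γ−1)}. -/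
/-- The coefficients of `R n`. -/
noncomputable def cf (n m : ℕ) : ℝ :=
  ((Nat.factorial (n + m) : ℝ) / ((Nat.factorial m : ℝ) * (Nat.factorial (n - m) : ℝ)))

theorem cf_pos (n m : ℕ) : 0 < cf n m := by
  unfold cf; positivity

theorem cf_rec (m d : ℕ) :
    ((m : ℝ) + 1) * cf (m + d + 1) (m + 1) = (2 * m + d + 2) * (d + 1) * cf (m + d + 1) m := by
  unfold cf
  have e1 : m + d + 1 - (m + 1) = d := by omega
  have e2 : m + d + 1 - m = d + 1 := by omega
  have e3 : m + d + 1 + (m + 1) = (m + d + 1 + m) + 1 := by omega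
  rw [e1, e2, e3, Nat.factorial_succ (m + d + 1 + m), Nat.factorial_succ m, Nat.factorial_succ d]
  have h1 : (Nat.factorial m : ℝ) ≠ 0 := by positivity
  have h2 : (Nat.factorial d : ℝ) ≠ 0 := by positivity
  have h3 : (m : ℝ) + 1 ≠ 0 := by positivity
  have h4 : (d : ℝ) + 1 ≠ 0 := by positivity
  push_cast
  field_simp
  ring

theorem R_eq (n : ℕ) (x : ℝ) : R n x = ∑ m ∈ Finset.range (n + 1), cf n m * x ^ m := rfl

theorem R_deriv (n : ℕ) (x : ℝ) :
    deriv (R n) x = ∑ m ∈ Finset.range (n + 1), cf n m * (m * x ^ (m - 1)) := by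
  have h : HasDerivAt (fun y => ∑ m ∈ Finset.range (n + 1), cf n m * y ^ m)
      (∑ m ∈ Finset.range (n + 1), cf n m * (m * x ^ (m - 1))) x :=
    HasDerivAt.fun_sum fun m _ => (hasDerivAt_pow m x).const_mul (cf n m)
  exact h.deriv

theorem case_small (k : ℕ) (hk : 1 ≤ k) (w : ℝ) (hw : 0 < w) (hw2 : w ≤ 1 / 2) :
    2 * R (k + 1) w ≤ deriv (R (k + 1)) w := by
  rw [R_deriv, Finset.sum_range_succ', R_eq, Finset.sum_range_succ _ (k + 1)]
  have hS : ∑ m ∈ Finset.range (k + 1), 4 * (cf (k + 1) m * w ^ m) ≤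
      ∑ m ∈ Finset.range (k + 1), cf (k + 1) (m + 1) * (((m + 1 : ℕ) : ℝ) * w ^ (m + 1 - 1)) := by
    apply Finset.sum_le_sum
    intro m hm
    obtain ⟨d, rfl⟩ : ∃ d, k = m + d := ⟨k - m, by have := Finset.mem_range.1 hm; omega⟩
    have h := cf_rec m d
    have h4 : (4 : ℝ) ≤ (2 * m + d + 2) * (d + 1) := by
      have : 4 ≤ (2 * m + d + 2) * (d + 1) := by nlinarith
      exact_mod_cast this
    have hp : 0 < cf (m + d + 1) m * w ^ m := mul_pos (cf_pos _ _) (by positivity)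
    have : cf (m + d + 1) (m + 1) * (((m + 1 : ℕ) : ℝ) * w ^ (m + 1 - 1)) =
        (2 * m + d + 2) * (d + 1) * (cf (m + d + 1) m * w ^ m) := by
      rw [Nat.add_sub_cancel]
      push_cast
      linear_combination w ^ m * h
    rw [this]
    exact mul_le_mul_of_nonneg_right h4 hp.le
  rw [← Finset.mul_sum] at hS
  have hl : cf (k + 1) k * w ^ k ≤ ∑ m ∈ Finset.range (k + 1), cf (k + 1) m * w ^ m :=
    Finset.single_le_sum (f := fun m => cf (k + 1) m * w ^ m)
      (fun m _ => (mul_pos (cf_pos _ _) (by positivity)).le) (by simp)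
  have ht : cf (k + 1) (k + 1) * w ^ (k + 1) ≤ cf (k + 1) k * w ^ k := by
    have h := cf_rec k 0
    simp only [add_zero, Nat.cast_zero] at h
    have h2 : cf (k + 1) (k + 1) = 2 * cf (k + 1) k := by
      have h3 : (k : ℝ) + 1 ≠ 0 := by positivity
      apply mul_left_cancel₀ h3
      linear_combination h
    have hp : 0 < cf (k + 1) k * w ^ k := mul_pos (cf_pos _ _) (by positivity)
    rw [h2, pow_succ]
    nlinarith
  simp only [Nat.cast_zero, zero_mul, mul_zero, add_zero]
  linarith

theorem case_large (k : ℕ) (w : ℝ) (hw2 : 1 / 2 ≤ w) :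
    R (k + 2) w ≤ w * deriv (R (k + 2)) w := by
  have hw : 0 < w := by linarith
  rw [← sub_nonneg, R_deriv, R_eq, Finset.mul_sum, ← Finset.sum_sub_distrib,
    Finset.sum_range_succ', Finset.sum_range_succ']
  have hl : cf (k + 2) 2 * w ^ 2 ≤ ∑ m ∈ Finset.range (k + 1),
      (w * (cf (k + 2) (m + 1 + 1) * (((m + 1 + 1 : ℕ) : ℝ) * w ^ (m + 1 + 1 - 1)))
        - cf (k + 2) (m + 1 + 1) * w ^ (m + 1 + 1)) := by
    have e : ∀ m ∈ Finset.range (k + 1),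
      (w * (cf (k + 2) (m + 1 + 1) * (((m + 1 + 1 : ℕ) : ℝ) * w ^ (m + 1 + 1 - 1)))
        - cf (k + 2) (m + 1 + 1) * w ^ (m + 1 + 1)) =
        ((m : ℝ) + 1) * (cf (k + 2) (m + 2) * w ^ (m + 2)) := by
      intro m _
      simp only [Nat.add_sub_cancel]
      push_cast
      ring
    rw [Finset.sum_congr rfl e]
    have := Finset.single_le_sum (s := Finset.range (k + 1)) (a := 0)
      (f := fun m : ℕ => ((m : ℝ) + 1) * (cf (k + 2) (m + 2) * w ^ (m + 2)))
      (fun m _ => (mul_pos (by positivity) (mul_pos (cf_pos _ _) (by positivity))).le) (by simp)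
    simpa using this
  have h0 := cf_rec 0 (k + 1)
  have h1 := cf_rec 1 k
  have e0 : 0 + (k + 1) + 1 = k + 2 := by omega
  have e1 : 1 + k + 1 = k + 2 := by omega
  rw [e0] at h0
  rw [e1] at h1
  norm_num at h0 h1
  have p0 := cf_pos (k + 2) 0
  have p1 := cf_pos (k + 2) 1
  have hk : (0 : ℝ) ≤ k := Nat.cast_nonneg k
  have g1 : 6 * cf (k + 2) 0 ≤ cf (k + 2) 1 := by
    rw [h0]
    apply mul_le_mul_of_nonneg_right _ p0.le
    nlinarith
  have g2 : 4 * cf (k + 2) 1 ≤ 2 * cf (k + 2) 2 := by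
    rw [h1]
    apply mul_le_mul_of_nonneg_right _ p1.le
    nlinarith
  have hsq : 1 / 4 ≤ w ^ 2 := by nlinarith
  have p2 := cf_pos (k + 2) 2
  have : cf (k + 2) 2 * (1 / 4) ≤ cf (k + 2) 2 * w ^ 2 := mul_le_mul_of_nonneg_left hsq p2.le
  norm_num at hl ⊢
  nlinarith

/-- Estimate (4.7): if `γ > 1`, `n ≥ 2` and `w₀ > 0` is a root of
`(1 − γ) R_n(w) + 2 w² R_n'(w) = 0`, then `−1/(2w₀) ≤ −1/max{γ−1, √(γ−1)}`. -/
theorem eigenvalue_bound (γ : ℝ) (hγ : 1 < γ) (n : ℕ) (hn : 2 ≤ n) (w₀ : ℝ)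
    (hw0 : 0 < w₀)
    (hroot : (1 - γ) * R n w₀ + 2 * w₀ ^ 2 * deriv (R n) w₀ = 0) :
    -1 / (2 * w₀) ≤ -1 / max (γ - 1) (Real.sqrt (γ - 1)) := by
  have hR : 0 < R n w₀ := by
    rw [R_eq]
    exact Finset.sum_pos (fun m _ => mul_pos (cf_pos _ _) (by positivity)) ⟨0, by simp⟩
  have key : 2 * w₀ ≤ max (γ - 1) (Real.sqrt (γ - 1)) := by
    obtain ⟨k, rfl⟩ : ∃ k, n = k + 2 := ⟨n - 2, by omega⟩
    rcases le_total w₀ (1 / 2) with h | h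
    · apply le_max_of_le_right
      apply Real.le_sqrt_of_sq_le
      have h1 := case_small (k + 1) (by omega) w₀ hw0 h
      have h2 := mul_le_mul_of_nonneg_left h1 (by positivity : 0 ≤ 2 * w₀ ^ 2)
      apply le_of_mul_le_mul_right _ hR
      linarith
    · apply le_max_of_le_left
      have h1 := case_large k w₀ h
      have h2 := mul_le_mul_of_nonneg_left h1 (by positivity : 0 ≤ 2 * w₀)
      apply le_of_mul_le_mul_right _ hR
      linarith
  rw [neg_div, neg_div]
  exact neg_le_neg (one_div_le_one_div_of_le (by positivity) key)
end

section
/- For every M > 0 there exists δ > 0 such that for every real γ with 1 < γ < 1 + δ, every integer n ≥ 1, and every real number w₀ > 0 satisfying (1 − γ)·R_n(w₀) + 2·w₀²·R_n'(w₀) = 0, one has 1/(2w₀) > M; equivalently, the real eigenvalues λ = −1/(2w₀) tend to −∞ as γ → 1⁺, uniformly in n. -/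
theorem R_hasDeriv (n : ℕ) (x : ℝ) : deriv (R n) x = ∑ m ∈ Finset.range (n + 1),
    ((Nat.factorial (n + m) : ℝ) / ((Nat.factorial m : ℝ) * (Nat.factorial (n - m) : ℝ)))
      * (m * x ^ (m - 1)) := by
  apply HasDerivAt.deriv
  unfold R
  apply HasDerivAt.fun_sum
  intro m _
  exact (hasDerivAt_pow m x).const_mul _

theorem R_deriv_ge_one (n : ℕ) (hn : 1 ≤ n) (x : ℝ) (hx : 0 < x) : 1 ≤ deriv (R n) x := by
  rw [R_hasDeriv]
  refine le_trans ?_ (Finset.single_le_sum (f := fun m : ℕ =>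
    ((Nat.factorial (n + m) : ℝ) / ((Nat.factorial m : ℝ) * (Nat.factorial (n - m) : ℝ)))
      * ((m : ℝ) * x ^ (m - 1))) (fun i _ => by positivity)
      (Finset.mem_range.2 (by omega : 1 < n + 1)))
  have h : (Nat.factorial (n - 1) : ℝ) ≤ Nat.factorial (n + 1) := by
    exact_mod_cast Nat.factorial_le (by omega)
  have h0 : (0 : ℝ) < Nat.factorial (n - 1) := by positivity
  simp only [Nat.factorial_one, Nat.cast_one, one_mul, Nat.sub_self, pow_zero, mul_one]
  rwa [one_le_div h0]

theorem R_le_s11 (n : ℕ) (x : ℝ) (hx : 0 < x) : R n x ≤ 1 + x * deriv (R n) x := by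
  rw [R_hasDeriv, R, Finset.sum_range_succ', Finset.sum_range_succ', mul_add, Finset.mul_sum]
  have h0 : (Nat.factorial n : ℝ) ≠ 0 := by positivity
  have h1 : ∑ k ∈ Finset.range n, ((Nat.factorial (n + (k + 1)) : ℝ) /
      ((Nat.factorial (k + 1) : ℝ) * (Nat.factorial (n - (k + 1)) : ℝ))) * x ^ (k + 1) ≤
      ∑ k ∈ Finset.range n, x * (((Nat.factorial (n + (k + 1)) : ℝ) /
      ((Nat.factorial (k + 1) : ℝ) * (Nat.factorial (n - (k + 1)) : ℝ))) *
        (((k + 1 : ℕ) : ℝ) * x ^ (k + 1 - 1))) := by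
    apply Finset.sum_le_sum
    intro k _
    generalize hA : ((Nat.factorial (n + (k + 1)) : ℝ) /
      ((Nat.factorial (k + 1) : ℝ) * (Nat.factorial (n - (k + 1)) : ℝ))) = A
    have hA0 : 0 ≤ A := by rw [← hA]; positivity
    have h2 : 0 ≤ A * x ^ (k + 1) * k := by positivity
    rw [Nat.add_sub_cancel]
    push_cast
    rw [pow_succ] at *
    nlinarith
  have h3 : (Nat.factorial (n + 0) : ℝ) /
      ((Nat.factorial 0 : ℝ) * (Nat.factorial (n - 0) : ℝ)) * x ^ 0 = 1 := by
    simp [h0]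
  rw [h3]
  simp only [Nat.cast_zero, zero_mul, mul_zero, add_zero]
  linarith

/-- As `γ → 1⁺` the real eigenvalues `λ = −1/(2w₀)` go to `−∞`, uniformly in `n`:
for every `M > 0` there is `δ > 0` such that for all `1 < γ < 1 + δ`, all `n ≥ 1`
and all positive roots `w₀` of `(1 − γ) R_n(w) + 2 w² R_n'(w) = 0`, one has `1/(2w₀) > M`. -/
theorem eigenvalues_to_neg_infinity (M : ℝ) (hM : 0 < M) :
    ∃ δ : ℝ, 0 < δ ∧ ∀ γ : ℝ, 1 < γ → γ < 1 + δ → ∀ n : ℕ, 1 ≤ n → ∀ w₀ : ℝ, 0 < w₀ →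
      (1 - γ) * R n w₀ + 2 * w₀ ^ 2 * deriv (R n) w₀ = 0 → 1 / (2 * w₀) > M := by
  obtain ⟨c, hc⟩ : ∃ c : ℝ, c = 1 / (2 * M) := ⟨_, rfl⟩
  have hc0 : 0 < c := by rw [hc]; positivity
  refine ⟨2 * c ^ 2 / (1 + c), by positivity, ?_⟩
  intro γ h1 h2 n hn w hw h
  have hD := R_deriv_ge_one n hn w hw
  have hR := R_le_s11 n w hw
  generalize deriv (R n) w = D at *
  generalize R n w = r at *
  have h3 : (γ - 1) * (1 + c) < 2 * c ^ 2 := by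
    rw [← lt_div_iff₀ (by positivity)]; linarith
  have h4 : 2 * w ^ 2 ≤ (γ - 1) * (1 + w) := by
    have : (γ - 1) * r ≤ (γ - 1) * ((1 + w) * D) :=
      mul_le_mul_of_nonneg_left (by nlinarith) (by linarith)
    have : 2 * w ^ 2 * D ≤ (γ - 1) * (1 + w) * D := by linarith
    exact le_of_mul_le_mul_right this (by linarith)
  have h5 : w < c := by
    by_contra hcw
    push Not at hcw
    have h6 : 2 * w ^ 2 * (1 + c) < 2 * c ^ 2 * (1 + w) := by
      have a1 := mul_le_mul_of_nonneg_right h4 (by linarith : 0 ≤ 1 + c)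
      have a2 := mul_lt_mul_of_pos_right h3 (by linarith : 0 < 1 + w)
      linarith
    have h7 : 0 ≤ (w - c) * (w + c + w * c) := mul_nonneg (by linarith) (by positivity)
    linarith
  rw [hc, lt_div_iff₀ (by positivity)] at h5
  rw [gt_iff_lt, lt_div_iff₀ (by positivity)]
  linarith
end
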